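/- For all complex numbers z and w, if f(z) = f(w), where f(z) = (1/6)z^4 + (2/3)z^3 + (7/6)z^2 + z, then at least one of the following holds: (1) z = w; (2) (z+1)^2 = (w+1)^2; (3) (z+1)^2 + (w+1)^2 = −1. -/

import Mathlib

theorem quartic_eq_cases
    (f : ℂ → ℂ)
    (hf : ∀ z : ℂ, f z = (1/6) * z^4 + (2/3) * z^3 + (7/6) * z^2 + z) :
    ∀ z w : ℂ, f z = f w →
      z = w ∨ (z + 1)^2 = (w + 1)^2 ∨ (z + 1)^2 + (w + 1)^2 = -1 := by
  intro z w h
  rw [hf, hf] at h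
  -- With `u = z + 1` one has `6 f(z) = u ^ 4 + u ^ 2 - 2`, so `6 (f z - f w)` factors as follows.
  have key : ((z + 1)^2 - (w + 1)^2) * ((z + 1)^2 + (w + 1)^2 + 1) = 0 := by
    linear_combination 6 * h
  rcases mul_eq_zero.mp key with h1 | h1
  · exact Or.inr (Or.inl (sub_eq_zero.mp h1))
  · exact Or.inr (Or.inr (eq_neg_of_add_eq_zero_left h1))
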